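/- For the win-lose game G = G(Ĝ, φ) constructed from an r-player win-lose game Ĝ with the positive utility property and a 3SAT formula φ with n ≥ 4 variables: if φ is unsatisfiable, then NE(G(Ĝ, φ)) = NE(Ĝ), i.e., the Nash equilibria of G are exactly the Nash equilibria of Ĝ (identified with mixed profiles of G supported on gadget strategies). -/

import Mathlib

open Finset

/-! ## Basic notions for finite strategic games -/

/-- `x` is a probability distribution on the finite type `α`. -/
def IsDist {α : Type*} [Fintype α] (x : α → ℝ) : Prop :=
  (∀ s, 0 ≤ x s) ∧ ∑ s, x s = 1

/-- Expected utility of player `i` in the mixed profile `σ`. -/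
noncomputable def EU {ι : Type*} [Fintype ι] [DecidableEq ι] {S : ι → Type*}
    [∀ i, Fintype (S i)] (U : (i : ι) → (∀ j, S j) → ℝ)
    (σ : ∀ j, S j → ℝ) (i : ι) : ℝ :=
  ∑ s : ∀ j, S j, (∏ j, σ j (s j)) * U i s

/-- `σ` is a (mixed) Nash equilibrium of the game with utilities `U`. -/
def IsNashEq {ι : Type*} [Fintype ι] [DecidableEq ι] {S : ι → Type*} [∀ i, Fintype (S i)]
    (U : (i : ι) → (∀ j, S j) → ℝ) (σ : ∀ j, S j → ℝ) : Prop :=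
  (∀ i, IsDist (σ i)) ∧
    ∀ (i : ι) (τ : S i → ℝ), IsDist τ →
      EU U (Function.update σ i τ) i ≤ EU U σ i

/-! ## The player and strategy sets of the game `G(Ĝ, φ)` -/

/-- The players: the two special players (`Sum.inl`), plus `k` further players. -/
abbrev Player (k : ℕ) : Type := Fin 2 ⊕ Fin k

/-- A literal `ℓ_j` (second component `true`) or `ℓ̄_j` (second component `false`). -/
abbrev Lit (n : ℕ) : Type := Fin n × Bool

/-- A pair variable `v_{j,k}` with `j ≠ k`. -/
abbrev PairVar (n : ℕ) : Type := {p : Fin n × Fin n // p.1 ≠ p.2}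

/-- The non-gadget strategies of a special player: literals, clauses and pair variables. -/
abbrev SpecialAux (n m : ℕ) : Type := Lit n ⊕ (Fin m ⊕ PairVar n)

/-- The strategy set of each player of `G(Ĝ, φ)`: gadget strategies together with the
literals, clauses and pair variables (for the special players), resp. the single extra
strategy `δ` (for the non-special players). -/
def Strat {k : ℕ} (Shat : Player k → Type) (n m : ℕ) : Player k → Type
  | .inl p => Shat (.inl p) ⊕ SpecialAux n m
  | .inr q => Shat (.inr q) ⊕ PUnit

instance {k n m : ℕ} (Shat : Player k → Type) [∀ i, Fintype (Shat i)]
    (i : Player k) : Fintype (Strat Shat n m i) := by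
  cases i with
  | inl p => exact inferInstanceAs (Fintype (Shat (.inl p) ⊕ SpecialAux n m))
  | inr q => exact inferInstanceAs (Fintype (Shat (.inr q) ⊕ PUnit))

/-- The gadget strategy underlying a strategy of `G(Ĝ, φ)`, if any. -/
def toGadget {k n m : ℕ} (Shat : Player k → Type) :
    ∀ i : Player k, Strat Shat n m i → Option (Shat i)
  | .inl _, .inl a => some a
  | .inl _, .inr _ => none
  | .inr _, .inl a => some a
  | .inr _, .inr _ => none

/-- The strategy chosen by the special player `q` in the profile `s`. -/
def specialOf {k n m : ℕ} (Shat : Player k → Type) (q : Fin 2)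
    (s : ∀ j, Strat Shat n m j) : Shat (.inl q) ⊕ SpecialAux n m :=
  s (.inl q)

/-- The other special player. -/
def otherP : Fin 2 → Fin 2 := fun p => if p = 0 then 1 else 0

/-- Whether a strategy of a special player lies in `{ℓ₀, ℓ̄₀, ℓ₁, ℓ̄₁} ∪ 𝒞 ∪ V`
(Case (10) of the utility table). -/
def allowedB {n m : ℕ} {α : Type*} : α ⊕ SpecialAux n m → Bool
  | .inl _ => false
  | .inr (.inl l) => decide (l.1.val ≤ 1)
  | .inr (.inr _) => true

/-- Utilities ⟨player 1, player 2, each non-special player⟩ in a profile in which the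
special players choose the non-gadget strategies `a₁`, `a₂` and every non-special player
chooses `δ` (Cases (1)–(6) and part of Case (11) of the utility table).  The cyclic
difference `I(ℓ′) − I(ℓ)` is computed as `(I(ℓ′) + n − I(ℓ)) % n`. -/
noncomputable def pairU {n m : ℕ} (Cl : Fin m → Finset (Lit n)) :
    SpecialAux n m → SpecialAux n m → ℝ × ℝ × ℝ
  | .inl l, .inl l' =>
      if l' = (l.1, !l.2) then (0, 0, 1)
      else if (l'.1.val + n - l.1.val) % n ≤ 1 then (1, 0, 1)
      else if (l'.1.val + n - l.1.val) % n ≤ 3 then (0, 1, 1)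
      else (0, 0, 1)
  | .inl l, .inr (.inl c) => if (l.1, !l.2) ∈ Cl c then (0, 1, 1) else (0, 0, 0)
  | .inl l, .inr (.inr v) => if l.1 = v.1.1 ∨ l.1 = v.1.2 then (0, 1, 1) else (0, 0, 0)
  | .inr (.inl c), .inl l => if (l.1, !l.2) ∈ Cl c then (1, 0, 1) else (0, 0, 0)
  | .inr (.inr v), .inl l => if l.1 = v.1.1 ∨ l.1 = v.1.2 then (1, 0, 1) else (0, 0, 0)
  | .inr _, .inr _ => (0, 0, 0)

/-- The utility function of the game `G(Ĝ, φ)`, following Cases (1)–(11) of the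
utility table. -/
noncomputable def BigU {k n m : ℕ} (Shat : Player k → Type) [∀ i, Fintype (Shat i)]
    (Uhat : (i : Player k) → (∀ j, Shat j) → ℝ) (Cl : Fin m → Finset (Lit n))
    (i : Player k) (s : ∀ j, Strat Shat n m j) : ℝ :=
  -- Case (7): all players choose gadget strategies
  if h : ∀ j, (toGadget Shat j (s j)).isSome = true then
    Uhat i (fun j => (toGadget Shat j (s j)).get (h j))
  -- Case (8): at least two, but not all, players choose gadget strategies
  else if 1 < (univ.filter fun j => (toGadget Shat j (s j)).isSome = true).card then
    if (toGadget Shat i (s i)).isSome then 1 else 0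
  -- Cases (9), (10), (11): exactly one player chooses a gadget strategy
  else if (univ.filter fun j => (toGadget Shat j (s j)).isSome = true).card = 1 then
    if (toGadget Shat i (s i)).isSome then
      match i with
      | .inl p => if allowedB (specialOf Shat (otherP p) s) then 1 else 0
      | .inr _ => 1
    else 0
  -- Cases (1)–(6), (11): no player chooses a gadget strategy, so every non-special
  -- player chooses `δ` and the special players choose non-gadget strategies
  else
    match specialOf Shat 0 s, specialOf Shat 1 s with
    | .inr a₁, .inr a₂ =>
        (match i with
         | .inl p => if p = 0 then (pairU Cl a₁ a₂).1 else (pairU Cl a₁ a₂).2.1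
         | .inr _ => (pairU Cl a₁ a₂).2.2)
    | _, _ => 0

/-- A mixed profile of the gadget game `Ĝ`, regarded as a mixed profile of `G(Ĝ, φ)`
via the inclusions `Σ̂ᵢ ⊆ Σᵢ`. -/
def liftProfile {k n m : ℕ} (Shat : Player k → Type)
    (σh : ∀ i, Shat i → ℝ) : ∀ i, Strat Shat n m i → ℝ
  | .inl p => Sum.elim (σh (.inl p)) (fun _ => 0)
  | .inr q => Sum.elim (σh (.inr q)) (fun _ => 0)

/-- The strategy "literal `(j, b)`" of the special player `p`. -/
def litStrat {k n m : ℕ} (Shat : Player k → Type) (p : Fin 2) (j : Fin n) (b : Bool) :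
    Strat Shat n m (Sum.inl p) :=
  Sum.inr (Sum.inl (j, b))

/-- The strategy `δ` of the non-special player `q`. -/
def deltaStrat {k n m : ℕ} (Shat : Player k → Type) (q : Fin k) :
    Strat Shat n m (Sum.inr q) :=
  Sum.inr PUnit.unit

/-- The assignment `γ` satisfies the 3SAT formula with clauses `Cl`. -/
def Satisfies {n m : ℕ} (Cl : Fin m → Finset (Lit n)) (γ : Fin n → Bool) : Prop :=
  ∀ c, ∃ l ∈ Cl c, γ l.1 = l.2

/-! Suppose an equilibrium puts weight on a strategy outside `Ĝ`. Joining `Ĝ` pays as soon as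
somebody else plays in it, or as soon as the other special player avoids the literals. Hence some
profile of the support lies entirely outside `Ĝ`, every non-special player uses `δ`, and both
special players use literals, each of which is a best reply to the opponent's literal weights.

Let `x j` and `y j` be the total weights that the two special players put on the literals of the
`j`-th variable. A literal of `v_j` earns the first player at most `y j + y (j + 1)`, and a literal
of `v_(j+3)` earns the second player `x j + x (j + 1)`, whereas the pair variables offer the sum of
any two weights. So `j, j + 1` is a top pair of `y` whenever `x j > 0`, and a top pair of `x`
whenever `y (j + 3) > 0`. Going around the cycle, all weights are positive and `y` is constant, say
`y = t`. Since the bound `2t` is attained, the second player never plays the negation of a literal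
of the first. A clause falsified by the resulting assignment would earn the first player `3t > 2t`,
so the assignment satisfies the formula.
-/

section MixedStrategies

variable {ι : Type*} [DecidableEq ι] {S : ι → Type*}

/-- The positive utility property: against every tuple of pure strategies of the other players,
every player has a strategy with positive utility. Such a tuple is encoded as a full profile `s`,
whose entry `s i` is overwritten. -/
def HasPositiveUtility (U : (i : ι) → (∀ j, S j) → ℝ) : Prop :=
  ∀ i s, ∃ t, 0 < U i (Function.update s i t)

lemma IsDist.exists_pos {α : Type*} [Fintype α] {x : α → ℝ} (hx : IsDist x) :
    ∃ s, 0 < x s := by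
  by_contra! h
  linarith [hx.2, sum_nonpos fun s (_ : s ∈ univ) => h s]

lemma isDist_single {α : Type*} [Fintype α] [DecidableEq α] (t : α) :
    IsDist (Pi.single t (1 : ℝ)) :=
  ⟨fun s => by rw [Pi.single_apply]; positivity, by simp⟩

variable [Fintype ι]

lemma prod_update_apply {M : Type*} [CommMonoid M] (σ : ∀ j, S j → M) (i : ι) (τ : S i → M)
    (s : ∀ j, S j) :
    ∏ j, Function.update σ i τ j (s j) = τ (s i) * ∏ j ∈ univ.erase i, σ j (s j) := by
  rw [← mul_prod_erase univ _ (mem_univ i), Function.update_self]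
  exact congrArg _ (prod_congr rfl fun j hj => by rw [Function.update_of_ne (ne_of_mem_erase hj)])

variable [∀ i, Fintype (S i)] {U : (i : ι) → (∀ j, S j) → ℝ} {σ : ∀ j, S j → ℝ} {i : ι}

open scoped Classical in
/-- The expected utility of player `i` in the mixed profile obtained from `σ` by letting `i`
deviate to the pure strategy `t`, encoded as the point mass at `t`. -/
noncomputable def deviationEU (U : (i : ι) → (∀ j, S j) → ℝ) (σ : ∀ j, S j → ℝ) (i : ι)
    (t : S i) : ℝ :=
  EU U (Function.update σ i (Pi.single t 1)) i

open scoped Classical in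
lemma deviationEU_eq_sum (U : (i : ι) → (∀ j, S j) → ℝ) (σ : ∀ j, S j → ℝ) (i : ι) (t : S i) :
    deviationEU U σ i t = ∑ s with s i = t, (∏ j ∈ univ.erase i, σ j (s j)) * U i s := by
  simp only [deviationEU, EU, prod_update_apply, sum_filter, Pi.single_apply, ite_mul, one_mul,
    zero_mul]

lemma EU_update (U : (i : ι) → (∀ j, S j) → ℝ) (σ : ∀ j, S j → ℝ) (i : ι) (τ : S i → ℝ) :
    EU U (Function.update σ i τ) i = ∑ t, τ t * deviationEU U σ i t := by
  classical
  simp only [EU, deviationEU_eq_sum, prod_update_apply, mul_sum]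
  rw [← sum_fiberwise univ fun s : ∀ j, S j => s i]
  refine sum_congr rfl fun t _ => sum_congr rfl fun s hs => ?_
  rw [(mem_filter.1 hs).2, mul_assoc]

lemma EU_eq_sum_deviationEU (U : (i : ι) → (∀ j, S j) → ℝ) (σ : ∀ j, S j → ℝ) (i : ι) :
    EU U σ i = ∑ t, σ i t * deviationEU U σ i t := by
  rw [← EU_update, Function.update_eq_self]

lemma isNashEq_iff_deviationEU_le :
    IsNashEq U σ ↔ (∀ i, IsDist (σ i)) ∧ ∀ i t, deviationEU U σ i t ≤ EU U σ i := by
  classical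
  refine and_congr_right fun _ =>
    ⟨fun h i t => h i _ (isDist_single t), fun h i τ hτ => ?_⟩
  calc EU U (Function.update σ i τ) i
      = ∑ t, τ t * deviationEU U σ i t := EU_update U σ i τ
    _ ≤ ∑ t, τ t * EU U σ i := sum_le_sum fun t _ => mul_le_mul_of_nonneg_left (h i t) (hτ.1 t)
    _ = EU U σ i := by rw [← sum_mul, hτ.2, one_mul]

lemma IsNashEq.deviationEU_le (h : IsNashEq U σ) (i : ι) (t : S i) :
    deviationEU U σ i t ≤ EU U σ i :=
  (isNashEq_iff_deviationEU_le.1 h).2 i t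

lemma IsNashEq.deviationEU_eq (h : IsNashEq U σ) {t : S i} (ht : 0 < σ i t) :
    deviationEU U σ i t = EU U σ i := by
  have regret_nonneg : ∀ t ∈ univ, 0 ≤ σ i t * (EU U σ i - deviationEU U σ i t) := fun t _ =>
    mul_nonneg ((h.1 i).1 t) (sub_nonneg.2 (h.deviationEU_le i t))
  have sum_regret : ∑ t, σ i t * (EU U σ i - deviationEU U σ i t) = 0 := by
    simp only [mul_sub, sum_sub_distrib, ← sum_mul, (h.1 i).2, one_mul,
      ← EU_eq_sum_deviationEU, sub_self]
  have := (sum_eq_zero_iff_of_nonneg regret_nonneg).1 sum_regret t (mem_univ t)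
  linarith [(mul_eq_zero.1 this).resolve_left ht.ne']

lemma deviationEU_eq_zero {t : S i}
    (h : ∀ s, s i = t → (∀ j ≠ i, σ j (s j) ≠ 0) → U i s = 0) : deviationEU U σ i t = 0 := by
  classical
  rw [deviationEU_eq_sum]
  refine sum_eq_zero fun s hs => ?_
  by_cases hσ : ∀ j ≠ i, σ j (s j) ≠ 0
  · rw [h s (mem_filter.1 hs).2 hσ, mul_zero]
  · push Not at hσ
    obtain ⟨j, hj, hj0⟩ := hσ
    rw [prod_eq_zero (mem_erase.2 ⟨hj, mem_univ j⟩) hj0, zero_mul]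

lemma deviationEU_pos_iff (hσ : ∀ j s, 0 ≤ σ j s) (hU : ∀ s, 0 ≤ U i s) {t : S i} :
    0 < deviationEU U σ i t ↔
      ∃ s : ∀ j, S j, s i = t ∧ (∀ j ≠ i, 0 < σ j (s j)) ∧ 0 < U i s := by
  constructor
  · intro h
    by_contra! hs
    refine h.ne' (deviationEU_eq_zero fun s hst hs0 => le_antisymm (hs s hst fun j hj => ?_) (hU s))
    exact (hσ j (s j)).lt_of_ne' (hs0 j hj)
  · rintro ⟨s, hst, hs, hUs⟩
    classical
    rw [deviationEU_eq_sum]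
    refine sum_pos' (fun s _ => mul_nonneg (prod_nonneg fun j _ => hσ j _) (hU s))
      ⟨s, by simp [hst], mul_pos (prod_pos fun j hj => hs j (ne_of_mem_erase hj)) hUs⟩

lemma IsNashEq.exists_pos_of_pos (h : IsNashEq U σ) (hU : ∀ s, 0 ≤ U i s) {s : ∀ j, S j}
    (hs : ∀ j ≠ i, 0 < σ j (s j)) {t' : S i} (ht' : 0 < U i (Function.update s i t')) {t : S i}
    (ht : 0 < σ i t) :
    ∃ s' : ∀ j, S j, s' i = t ∧ (∀ j ≠ i, 0 < σ j (s' j)) ∧ 0 < U i s' := by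
  have hσ : ∀ j s, 0 ≤ σ j s := fun j => (h.1 j).1
  have pos_t' : 0 < deviationEU U σ i t' := (deviationEU_pos_iff hσ hU).2
    ⟨Function.update s i t', Function.update_self .., fun j hj => by
      rw [Function.update_of_ne hj]; exact hs j hj, ht'⟩
  rw [← deviationEU_pos_iff hσ hU, h.deviationEU_eq ht]
  exact pos_t'.trans_le (h.deviationEU_le i t')

end MixedStrategies

section TopPairs

variable {M : Type*} [AddCommMonoid M]

/-- The pair `j, k` carries the largest total `f`-weight among all pairs of distinct points: this
is what the pair variables of `G(Ĝ, φ)` enforce on the weights of an equilibrium. -/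
def IsTopPair [LE M] {α : Type*} (f : α → M) (j k : α) : Prop :=
  ∀ a b, a ≠ b → f a + f b ≤ f j + f k

namespace IsTopPair

variable [PartialOrder M] {α : Type*} {f : α → M} {j k p q : α}

lemma symm (h : IsTopPair f j k) : IsTopPair f k j := fun a b hab =>
  (h a b hab).trans_eq (add_comm _ _)

variable [IsOrderedCancelAddMonoid M]

lemma le_left (h : IsTopPair f j k) (hp : p ≠ k) : f p ≤ f j :=
  le_of_add_le_add_right (h p k hp)

lemma le_right (h : IsTopPair f j k) (hp : p ≠ j) : f p ≤ f k := h.symm.le_left hp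

lemma pos_left (h : IsTopPair f j k) (hpq : p ≠ q) (hp : 0 < f p) (hq : 0 < f q) : 0 < f j := by
  rcases eq_or_ne p k with rfl | hpk
  · exact hq.trans_le (h.le_left hpq.symm)
  · exact hp.trans_le (h.le_left hpk)

lemma pos_right (h : IsTopPair f j k) (hpq : p ≠ q) (hp : 0 < f p) (hq : 0 < f q) : 0 < f k :=
  h.symm.pos_left hpq hp hq

end IsTopPair

variable [LinearOrder M] [IsOrderedCancelAddMonoid M] {A : Type*} [AddCommGroup A] {g : A}
  {x y : A → M}

lemma eq_of_forall_isTopPair (hg2 : 2 • g ≠ 0)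
    (hy : ∀ j, IsTopPair y j (j + g)) (a b : A) : y a = y b := by
  have le (a b : A) : y a ≤ y b := by
    rcases eq_or_ne a (b + g) with rfl | hab
    · simpa using (hy (b - g)).le_right (p := b + g) (by grind)
    · exact (hy b).le_left hab
  exact le_antisymm (le a b) (le b a)

section

variable (hxy : ∀ j, 0 < x j → IsTopPair y j (j + g))
  (hyx : ∀ j, 0 < y (j + 3 • g) → IsTopPair x j (j + g))
include hxy hyx

-- If `x` were positive at `j` only, then `y` could be positive only at `j + 2g` and `j + 3g`, and
-- `j, j + g` would not be a top pair of `y`.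
lemma exists_ne_pos_pos_of_isTopPair (hg2 : 2 • g ≠ 0) (hg3 : 3 • g ≠ 0)
    (hx : ∃ j, 0 < x j) (hy : ∃ i, 0 < y i) : ∃ p q, p ≠ q ∧ 0 < x p ∧ 0 < x q := by
  obtain ⟨j, hj⟩ := hx
  obtain ⟨i, hi⟩ := hy
  by_contra! h
  have hxj : ∀ p, p ≠ j → x p ≤ 0 := fun p hp => h j p hp.symm hj
  have eq_shift (i : A) (hi : 0 < y i) : i = j + 3 • g ∨ i = j + 2 • g := by
    have htop := hyx (i - 3 • g) (by rwa [sub_add_cancel])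
    rcases eq_or_ne j (i - 3 • g) with rfl | hj0
    · exact .inl (by abel)
    rcases eq_or_ne j (i - 3 • g + g) with rfl | hj1
    · exact .inr (by abel)
    · exact absurd (hj.trans_le (htop.le_left hj1)) (hxj _ hj0.symm).not_gt
  have hi_ne : i ≠ j + g := by
    rcases eq_shift i hi with rfl | rfl <;> grind
  rcases eq_shift j (hi.trans_le ((hxy j hj).le_left hi_ne)) with e | e
  · exact hg3 (left_eq_add.1 e)
  · exact hg2 (left_eq_add.1 e)

lemma pos_sub_of_isTopPair (hg2 : 2 • g ≠ 0) (hg3 : 3 • g ≠ 0)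
    (hx : ∃ j, 0 < x j) (hy : ∃ i, 0 < y i) {j : A} (hj : 0 < x j) : 0 < x (j - g) ∧ 0 < y j := by
  obtain ⟨p, q, hpq, hp, hq⟩ := exists_ne_pos_pos_of_isTopPair hxy hyx hg2 hg3 hx hy
  obtain ⟨i, hi⟩ := hy
  obtain ⟨l, rfl⟩ : ∃ l, i = l + 3 • g := ⟨i - 3 • g, by abel⟩
  have hl : 0 < y l := by
    refine hi.trans_le ((hxy l ((hyx l hi).pos_left hpq hp hq)).le_left ?_)
    grind
  have hne : l ≠ l + 3 • g := fun e => hg3 (left_eq_add.1 e)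
  have hyj : 0 < y (j + g) := (hxy j hj).pos_right hne hl hi
  have htop := hyx (j - 2 • g) (by convert hyj using 2; abel)
  have hpos := htop.pos_right hpq hp hq
  exact ⟨by convert hpos using 2; abel, (hxy j hj).pos_left hne hl hi⟩

theorem forall_pos_and_forall_eq_of_isTopPair (hg : ∀ a, a ∈ AddSubgroup.zmultiples g)
    (hA : 4 ≤ Nat.card A) (hx : ∃ j, 0 < x j) (hy : ∃ i, 0 < y i) :
    (∀ j, 0 < x j) ∧ ∃ t > 0, ∀ j, y j = t := by
  have : Finite A := Nat.finite_of_card_ne_zero (by omega)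
  have horder : 4 ≤ addOrderOf g := by rwa [addOrderOf_eq_card_of_forall_mem_zmultiples hg]
  have hg2 : 2 • g ≠ 0 := nsmul_ne_zero_of_lt_addOrderOf two_ne_zero (by omega)
  have hg3 : 3 • g ≠ 0 := nsmul_ne_zero_of_lt_addOrderOf three_ne_zero (by omega)
  have step : ∀ {j}, 0 < x j → 0 < x (j - g) ∧ 0 < y j :=
    pos_sub_of_isTopPair hxy hyx hg2 hg3 hx hy
  obtain ⟨j₀, hj₀⟩ := hx
  have pos_sub_nsmul (d : ℕ) : 0 < x (j₀ - d • g) := by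
    induction d with
    | zero => simpa using hj₀
    | succ d ih => simpa [succ_nsmul, sub_sub] using (step ih).1
  have hpos (j : A) : 0 < x j := by
    obtain ⟨d, hd⟩ := mem_multiples_iff_mem_zmultiples.2 (hg (j₀ - j))
    rw [show j = j₀ - d • g by rw [show d • g = j₀ - j from hd]; abel]
    exact pos_sub_nsmul d
  exact ⟨hpos, y j₀, (step hj₀).2, fun j =>
    eq_of_forall_isTopPair hg2 (fun j => hxy j (hpos j)) j j₀⟩

end

end TopPairs

section LiteralDuel

variable {n m : ℕ} {Cl : Fin m → Finset (Lit n)} {p : Fin 2}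

lemma pairU_nonneg (a b : SpecialAux n m) :
    0 ≤ (pairU Cl a b).1 ∧ 0 ≤ (pairU Cl a b).2.1 ∧ 0 ≤ (pairU Cl a b).2.2 := by
  rcases a with a | a | a <;> rcases b with b | b | b <;> simp only [pairU] <;>
    (try split_ifs) <;> norm_num

/-- The utility of the special player `p` when she plays the non-gadget strategy `a`, the other
special player plays the non-gadget strategy `b`, and all non-special players play `δ`. -/
noncomputable def duelPayoff (Cl : Fin m → Finset (Lit n)) (p : Fin 2) (a b : SpecialAux n m) : ℝ :=
  if p = 0 then (pairU Cl a b).1 else (pairU Cl b a).2.1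

lemma duelPayoff_nonliteral (a : SpecialAux n m) (b : Fin m ⊕ PairVar n) :
    duelPayoff Cl p a (.inr b) = 0 := by
  rcases a with a | a | a <;> rcases b with b | b <;>
    simp only [duelPayoff, pairU] <;> split_ifs <;> rfl

lemma duelPayoff_clause (c : Fin m) (l : Lit n) :
    duelPayoff Cl p (.inr (.inl c)) (.inl l) = if (l.1, !l.2) ∈ Cl c then 1 else 0 := by
  simp only [duelPayoff, pairU]
  split_ifs <;> rfl

lemma duelPayoff_pairVar (v : PairVar n) (l : Lit n) :
    duelPayoff Cl p (.inr (.inr v)) (.inl l) =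
      if l.1 ∈ ({v.1.1, v.1.2} : Finset (Fin n)) then 1 else 0 := by
  simp only [duelPayoff, pairU, mem_insert, mem_singleton]
  split_ifs <;> rfl

section

variable [NeZero n]

lemma val_nsmul_one {d : ℕ} (hd : d < n) : (d • (1 : Fin n)).val = d := by
  induction d with
  | zero => simp
  | succ d ih =>
    rw [succ_nsmul, Fin.val_add, ih (by omega), Fin.val_one', Nat.add_mod_mod, Nat.mod_eq_of_lt hd]

lemma cyclicDiff_eq_iff {d : ℕ} (hd : d < n) (i j : Fin n) :
    (i.val + n - j.val) % n = d ↔ i = j + d • 1 := by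
  have val_sub : (i - j).val = (i.val + n - j.val) % n := by
    rw [Fin.val_sub, show n - j.val + i.val = i.val + n - j.val by omega]
  rw [← val_sub, ← sub_eq_iff_eq_add', Fin.ext_iff, val_nsmul_one hd]

lemma duelPayoff_zero_literal (hn : 4 ≤ n) (j : Fin n) (b : Bool) (l : Lit n) :
    duelPayoff Cl 0 (.inl (j, b)) (.inl l) =
      (if l.1 ∈ ({j, j + 1} : Finset (Fin n)) then 1 else 0) - if l = (j, !b) then 1 else 0 := by
  have near : (l.1.val + n - j.val) % n ≤ 1 ↔ l.1 ∈ ({j, j + 1} : Finset (Fin n)) := by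
    have h0 := cyclicDiff_eq_iff (d := 0) (by omega) l.1 j
    have h1 := cyclicDiff_eq_iff (d := 1) (by omega) l.1 j
    rw [zero_nsmul, add_zero] at h0
    rw [one_nsmul] at h1
    rw [Nat.le_one_iff_eq_zero_or_eq_one, h0, h1, mem_insert, mem_singleton]
  simp only [duelPayoff, pairU, near]
  split_ifs <;> simp_all

lemma duelPayoff_one_literal (hn : 4 ≤ n) (j : Fin n) (b : Bool) (l : Lit n) :
    duelPayoff Cl 1 (.inl (j + 3 • 1, b)) (.inl l) =
      if l.1 ∈ ({j, j + 1} : Finset (Fin n)) then 1 else 0 := by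
  set d := ((j + 3 • 1 : Fin n).val + n - l.1.val) % n with hd
  have diff_zero : j + 3 • 1 = l.1 ↔ d = 0 := by
    rw [hd, cyclicDiff_eq_iff (by omega), zero_nsmul, add_zero]
  have diff_two_or_three : d = 2 ∨ d = 3 ↔ l.1 ∈ ({j, j + 1} : Finset (Fin n)) := by
    rw [hd, cyclicDiff_eq_iff (by omega), cyclicDiff_eq_iff (by omega), mem_insert, mem_singleton,
      add_left_inj, succ_nsmul' 1 2, ← add_assoc, add_left_inj, or_comm, eq_comm (a := j),
      eq_comm (a := j + 1)]
  have neg_imp : ((j + 3 • 1, b) : Lit n) = (l.1, !l.2) → d = 0 := fun h =>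
    diff_zero.1 (congrArg Prod.fst h)
  simp only [duelPayoff, pairU, ← hd, ← diff_two_or_three]
  clear_value d
  grind

end

/-- The total weight that `y` puts on the two literals of a variable. -/
def litMass (y : Lit n → ℝ) (j : Fin n) : ℝ := ∑ b, y (j, b)

/-- The expected duel payoff of a special player against literal weights `y` of the other special
player. The weights need not sum to `1`, as the remaining strategies of the opponent yield `0`. -/
noncomputable def expDuelPayoff (Cl : Fin m → Finset (Lit n)) (p : Fin 2) (y : Lit n → ℝ)
    (a : SpecialAux n m) : ℝ :=
  ∑ l, y l * duelPayoff Cl p a (.inl l)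

variable {x y : Lit n → ℝ}

lemma litMass_eq_add (y : Lit n → ℝ) (j : Fin n) (b : Bool) :
    litMass y j = y (j, b) + y (j, !b) := by
  cases b <;> simp [litMass, add_comm]

lemma litMass_pos_iff (hy : ∀ l, 0 ≤ y l) {j : Fin n} : 0 < litMass y j ↔ ∃ b, 0 < y (j, b) := by
  simpa [litMass] using sum_pos_iff_of_nonneg (s := univ) fun b _ => hy (j, b)

lemma sum_mul_ite_mem_eq_sum_litMass (y : Lit n → ℝ) (s : Finset (Fin n)) :
    ∑ l, y l * (if l.1 ∈ s then 1 else 0) = ∑ j ∈ s, litMass y j := by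
  rw [Fintype.sum_prod_type, ← sum_ite_mem_eq s]
  exact sum_congr rfl fun j _ => by by_cases hj : j ∈ s <;> simp [hj, litMass]

lemma expDuelPayoff_pairVar (y : Lit n → ℝ) {j k : Fin n} (h : j ≠ k) :
    expDuelPayoff Cl p y (.inr (.inr ⟨(j, k), h⟩)) = litMass y j + litMass y k := by
  simp only [expDuelPayoff, duelPayoff_pairVar, sum_mul_ite_mem_eq_sum_litMass, sum_pair h]

lemma expDuelPayoff_clause (y : Lit n → ℝ) (c : Fin m) :
    expDuelPayoff Cl p y (.inr (.inl c)) = ∑ l ∈ Cl c, y (l.1, !l.2) := by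
  simp only [expDuelPayoff, duelPayoff_clause, mul_ite, mul_one, mul_zero, ← sum_filter]
  exact sum_nbij' (fun l => (l.1, !l.2)) (fun l => (l.1, !l.2)) (by simp) (by simp) (by simp)
    (by simp) (by simp)

section

variable [NeZero n]

lemma self_ne_add_one (hn : 4 ≤ n) (j : Fin n) : j ≠ j + 1 := by
  rw [ne_eq, left_eq_add, Fin.one_eq_zero_iff]
  omega

lemma expDuelPayoff_zero_literal (hn : 4 ≤ n) (y : Lit n → ℝ) (j : Fin n) (b : Bool) :
    expDuelPayoff Cl 0 y (.inl (j, b)) = litMass y j + litMass y (j + 1) - y (j, !b) := by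
  simp only [expDuelPayoff, duelPayoff_zero_literal hn, mul_sub, sum_sub_distrib,
    sum_mul_ite_mem_eq_sum_litMass, sum_pair (self_ne_add_one hn j)]
  simp

lemma expDuelPayoff_one_literal (hn : 4 ≤ n) (x : Lit n → ℝ) (j : Fin n) (b : Bool) :
    expDuelPayoff Cl 1 x (.inl (j + 3 • 1, b)) = litMass x j + litMass x (j + 1) := by
  simp only [expDuelPayoff, duelPayoff_one_literal hn, sum_mul_ite_mem_eq_sum_litMass,
    sum_pair (self_ne_add_one hn j)]

end

/-- Every literal to which the special player `p`, with literal weights `x`, assigns positive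
weight is a best reply, among the non-gadget strategies, to the literal weights `y` of the other
special player. -/
def IsLiteralBestReply (Cl : Fin m → Finset (Lit n)) (p : Fin 2) (x y : Lit n → ℝ) : Prop :=
  ∀ l a, 0 < x l → expDuelPayoff Cl p y a ≤ expDuelPayoff Cl p y (.inl l)

namespace IsLiteralBestReply

variable [NeZero n]

lemma isTopPair_zero (h : IsLiteralBestReply Cl 0 x y) (hn : 4 ≤ n) (hx : ∀ l, 0 ≤ x l)
    (hy : ∀ l, 0 ≤ y l) {j : Fin n} (hj : 0 < litMass x j) :
    IsTopPair (litMass y) j (j + 1) := by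
  intro i k hik
  obtain ⟨b, hb⟩ := (litMass_pos_iff hx).1 hj
  have := h (j, b) (.inr (.inr ⟨(i, k), hik⟩)) hb
  rw [expDuelPayoff_pairVar, expDuelPayoff_zero_literal hn] at this
  linarith [hy (j, !b)]

lemma isTopPair_one (h : IsLiteralBestReply Cl 1 y x) (hn : 4 ≤ n) (hy : ∀ l, 0 ≤ y l)
    {j : Fin n} (hj : 0 < litMass y (j + 3 • 1)) : IsTopPair (litMass x) j (j + 1) := by
  intro i k hik
  obtain ⟨b, hb⟩ := (litMass_pos_iff hy).1 hj
  have := h (j + 3 • 1, b) (.inr (.inr ⟨(i, k), hik⟩)) hb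
  rwa [expDuelPayoff_pairVar, expDuelPayoff_one_literal hn] at this

lemma negation_eq_zero (h : IsLiteralBestReply Cl 0 x y) (hn : 4 ≤ n) (hy : ∀ l, 0 ≤ y l)
    {j : Fin n} {b : Bool} (hb : 0 < x (j, b)) : y (j, !b) = 0 := by
  have := h (j, b) (.inr (.inr ⟨(j, j + 1), self_ne_add_one hn j⟩)) hb
  rw [expDuelPayoff_pairVar, expDuelPayoff_zero_literal hn] at this
  linarith [hy (j, !b)]

-- Against the all-equal variable weights `t`, a clause violated by `γ` would earn
-- `(Cl c).card * t ≥ 3 * t`, whereas every literal earns at most `2 * t`.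
lemma satisfies (h : IsLiteralBestReply Cl 0 x y) (hn : 4 ≤ n) (hCl : ∀ c, 3 ≤ (Cl c).card)
    (hy : ∀ l, 0 ≤ y l) {γ : Fin n → Bool} (hγ : ∀ j, 0 < x (j, γ j)) {t : ℝ} (ht : 0 < t)
    (hyt : ∀ j, litMass y j = t) : Satisfies Cl γ := by
  have hneg (j : Fin n) : y (j, !γ j) = 0 := h.negation_eq_zero hn hy (hγ j)
  have hlit (j : Fin n) : y (j, γ j) = t := by
    linarith [litMass_eq_add y j (γ j), hyt j, hneg j]
  intro c
  by_contra! hc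
  have violated : ∀ l ∈ Cl c, y (l.1, !l.2) = t := fun l hl => by
    rw [← Bool.eq_not.2 (hc l hl), hlit]
  have le_two : ((Cl c).card : ℝ) * t ≤ 2 * t := by
    have := h (0, γ 0) (.inr (.inl c)) (hγ 0)
    rw [expDuelPayoff_clause, expDuelPayoff_zero_literal hn, hyt, hyt, hneg,
      sum_congr rfl violated, sum_const, nsmul_eq_mul] at this
    linarith
  have three_le : (3 : ℝ) ≤ (Cl c).card := mod_cast hCl c
  linarith [le_of_mul_le_mul_right le_two ht]

theorem exists_satisfies (hxy : IsLiteralBestReply Cl 0 x y) (hyx : IsLiteralBestReply Cl 1 y x)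
    (hn : 4 ≤ n) (hCl : ∀ c, 3 ≤ (Cl c).card) (hx : ∀ l, 0 ≤ x l) (hy : ∀ l, 0 ≤ y l)
    (hxpos : ∃ l, 0 < x l) (hypos : ∃ l, 0 < y l) : ∃ γ, Satisfies Cl γ := by
  obtain ⟨⟨i, b⟩, hi⟩ := hxpos
  obtain ⟨⟨j, d⟩, hj⟩ := hypos
  have one_generates (k : Fin n) : k ∈ AddSubgroup.zmultiples (1 : Fin n) :=
    AddSubgroup.mem_zmultiples_iff.2 ⟨k.val, Fin.ext (val_nsmul_one k.isLt)⟩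
  obtain ⟨hpos, t, ht, hyt⟩ := forall_pos_and_forall_eq_of_isTopPair
    (fun _ => hxy.isTopPair_zero hn hx hy) (fun _ => hyx.isTopPair_one hn hy) one_generates
    (by simpa using hn) ⟨i, (litMass_pos_iff hx).2 ⟨b, hi⟩⟩ ⟨j, (litMass_pos_iff hy).2 ⟨d, hj⟩⟩
  choose γ hγ using fun j => (litMass_pos_iff hx).1 (hpos j)
  exact ⟨γ, hxy.satisfies hn hCl hy hγ ht hyt⟩

end IsLiteralBestReply

end LiteralDuel

section ConstructedGame

lemma otherP_ne (p : Fin 2) : otherP p ≠ p := by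
  fin_cases p <;> decide

lemma eq_otherP_of_ne {p q : Fin 2} (h : q ≠ p) : q = otherP p := by
  fin_cases p <;> fin_cases q <;> first | rfl | exact absurd rfl h

variable {k n m : ℕ} {Shat : Player k → Type} {i j : Player k}

lemma exists_player_ne (i : Player k) : ∃ j, j ≠ i := by
  rcases i with p | q
  · exact ⟨.inl (otherP p), Sum.inl_injective.ne (otherP_ne p)⟩
  · exact ⟨.inl 0, Sum.inl_ne_inr⟩

/-- The strategy `t` of `G(Ĝ, φ)` belongs to the gadget game `Ĝ`. -/
abbrev IsGadget (t : Strat Shat n m i) : Prop :=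
  (toGadget Shat i t).isSome = true

/-- The inclusion `Σ̂ᵢ ⊆ Σᵢ`. -/
def gadgetStrat : ∀ {i : Player k}, Shat i → Strat Shat n m i
  | .inl _, a => Sum.inl a
  | .inr _, a => Sum.inl a

@[simp]
lemma toGadget_gadgetStrat (a : Shat i) :
    toGadget Shat i (gadgetStrat a : Strat Shat n m i) = some a := by
  rcases i with p | q <;> rfl

lemma isGadget_gadgetStrat (a : Shat i) : IsGadget (gadgetStrat a : Strat Shat n m i) := by
  simp [IsGadget]

lemma gadgetStrat_injective :
    Function.Injective (gadgetStrat : Shat i → Strat Shat n m i) := fun a b hab => by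
  simpa using congrArg (toGadget Shat i) hab

lemma IsGadget.exists_eq {t : Strat Shat n m i} (ht : IsGadget t) : ∃ a, t = gadgetStrat a := by
  rcases i with p | q <;> rcases t with a | a <;>
    first | exact ⟨a, rfl⟩ | exact absurd ht Bool.false_ne_true

lemma exists_eq_gadgetStrat {s : ∀ j, Strat Shat n m j} (hs : ∀ j, IsGadget (s j)) :
    ∃ a : ∀ j, Shat j, s = fun j => gadgetStrat (a j) := by
  choose a ha using fun j => (hs j).exists_eq
  exact ⟨a, funext ha⟩

lemma card_gadget_pos {s : ∀ j, Strat Shat n m j} (hj : IsGadget (s j)) :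
    0 < #{j | (toGadget Shat j (s j)).isSome = true} :=
  card_pos.2 ⟨j, by simpa using hj⟩

/-- The inclusion of the literals, clauses and pair variables into the strategies of the special
player `p`. -/
def auxStrat (Shat : Player k → Type) (p : Fin 2) (a : SpecialAux n m) :
    Strat Shat n m (.inl p) :=
  Sum.inr a

lemma auxStrat_injective (p : Fin 2) :
    Function.Injective (auxStrat Shat p : SpecialAux n m → Strat Shat n m (.inl p)) :=
  Sum.inr_injective

lemma not_isGadget_auxStrat (p : Fin 2) (a : SpecialAux n m) : ¬ IsGadget (auxStrat Shat p a) :=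
  Bool.false_ne_true

lemma exists_eq_auxStrat {p : Fin 2} {t : Strat Shat n m (.inl p)} (ht : ¬ IsGadget t) :
    ∃ a, t = auxStrat Shat p a := by
  rcases t with a | a
  · exact absurd rfl ht
  · exact ⟨a, rfl⟩

lemma eq_deltaStrat {q : Fin k} {t : Strat Shat n m (.inr q)} (ht : ¬ IsGadget t) :
    t = deltaStrat Shat q := by
  rcases t with a | a
  · exact absurd rfl ht
  · rfl

/-- The profile in which the special players `p` and `otherP p` play the non-gadget strategies
`a` and `b`, and every non-special player plays `δ`. -/
def duelProfile (Shat : Player k → Type) (p : Fin 2) (a b : SpecialAux n m) :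
    ∀ j, Strat Shat n m j
  | .inl q => auxStrat Shat q (if q = p then a else b)
  | .inr q => deltaStrat Shat q

lemma not_isGadget_duelProfile (p : Fin 2) (a b : SpecialAux n m) (j : Player k) :
    ¬ IsGadget (duelProfile Shat p a b j) := by
  rcases j <;> exact Bool.false_ne_true

lemma duelProfile_self (p : Fin 2) (a b : SpecialAux n m) :
    duelProfile Shat p a b (.inl p) = auxStrat Shat p a := by
  simp [duelProfile]

lemma duelProfile_otherP (p : Fin 2) (a b : SpecialAux n m) :
    duelProfile Shat p a b (.inl (otherP p)) = auxStrat Shat (otherP p) b := by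
  simp [duelProfile, otherP_ne]

lemma duelProfile_swap (a b : SpecialAux n m) :
    duelProfile Shat 1 a b = duelProfile Shat 0 b a := by
  funext j
  rcases j with q | q
  · fin_cases q <;> rfl
  · rfl

lemma exists_eq_duelProfile {s : ∀ j, Strat Shat n m j} (hs : ∀ j, ¬ IsGadget (s j)) (p : Fin 2) :
    ∃ a b, s = duelProfile Shat p a b := by
  obtain ⟨a, ha⟩ := exists_eq_auxStrat (hs (.inl p))
  obtain ⟨b, hb⟩ := exists_eq_auxStrat (hs (.inl (otherP p)))
  refine ⟨a, b, funext fun j => ?_⟩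
  rcases j with q | q
  · rcases eq_or_ne q p with rfl | hq
    · rw [ha, duelProfile_self]
    · obtain rfl := eq_otherP_of_ne hq
      rw [hb, duelProfile_otherP]
  · exact eq_deltaStrat (hs (.inr q))

variable [∀ i, Fintype (Shat i)] {Uhat : (i : Player k) → (∀ j, Shat j) → ℝ}
  {Cl : Fin m → Finset (Lit n)} {s : ∀ j, Strat Shat n m j}

lemma BigU_gadgetStrat (i : Player k) (a : ∀ j, Shat j) :
    BigU Shat Uhat Cl i (fun j => gadgetStrat (a j)) = Uhat i a := by
  simp [BigU]

lemma BigU_eq_zero (hi : ¬ IsGadget (s i)) (hj : IsGadget (s j)) :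
    BigU Shat Uhat Cl i s = 0 := by
  have card_pos := card_gadget_pos hj
  have not_all : ¬ ∀ j, IsGadget (s j) := fun h => hi (h i)
  simp only [BigU, dif_neg not_all, if_neg hi]
  split_ifs
  · rfl
  · rfl
  · omega

lemma BigU_eq_one (hi : IsGadget (s i)) (hij : i ≠ j) (hj : IsGadget (s j))
    (not_all : ¬ ∀ j, IsGadget (s j)) : BigU Shat Uhat Cl i s = 1 := by
  have one_lt_card : 1 < #{j | IsGadget (s j)} :=
    one_lt_card.2 ⟨i, by simpa using hi, j, by simpa using hj, hij⟩
  simp only [BigU, dif_neg not_all, if_pos one_lt_card, if_pos hi]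

lemma BigU_eq_one_of_allowed {p : Fin 2} (hp : IsGadget (s (.inl p)))
    (hs : ∀ j ≠ .inl p, ¬ IsGadget (s j))
    (hallowed : allowedB (specialOf Shat (otherP p) s) = true) :
    BigU Shat Uhat Cl (.inl p) s = 1 := by
  have not_all : ¬ ∀ j, IsGadget (s j) := fun h =>
    hs (.inl (otherP p)) (Sum.inl_injective.ne (otherP_ne p)) (h _)
  have card_eq_one : #{j | IsGadget (s j)} = 1 := card_eq_one.2 ⟨.inl p, by
    ext j
    simpa using ⟨not_imp_not.1 (hs j), fun h => h ▸ hp⟩⟩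
  simp only [BigU, dif_neg not_all, card_eq_one, lt_irrefl, if_false, if_true, if_pos hp,
    hallowed]

lemma BigU_duelProfile (i : Player k) (a b : SpecialAux n m) :
    BigU Shat Uhat Cl i (duelProfile Shat 0 a b) = match i with
      | .inl p => if p = 0 then (pairU Cl a b).1 else (pairU Cl a b).2.1
      | .inr _ => (pairU Cl a b).2.2 := by
  have none_gadget := not_isGadget_duelProfile (Shat := Shat) 0 a b
  have not_all : ¬ ∀ j, IsGadget (duelProfile Shat 0 a b j) := fun h => none_gadget _ (h (.inl 0))
  have card_eq_zero : #{j | IsGadget (duelProfile Shat 0 a b j)} = 0 :=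
    card_eq_zero.2 (filter_eq_empty_iff.2 fun j _ => none_gadget j)
  simp only [BigU, dif_neg not_all, card_eq_zero]
  rfl

lemma BigU_special_duelProfile (p : Fin 2) (a b : SpecialAux n m) :
    BigU Shat Uhat Cl (.inl p) (duelProfile Shat p a b) = duelPayoff Cl p a b := by
  fin_cases p
  · exact BigU_duelProfile (.inl 0) a b
  · exact (congrArg _ (duelProfile_swap a b)).trans (BigU_duelProfile (.inl 1) b a)

lemma BigU_nonneg (hU : ∀ i a, 0 ≤ Uhat i a) (i : Player k) (s : ∀ j, Strat Shat n m j) :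
    0 ≤ BigU Shat Uhat Cl i s := by
  by_cases hs : ∃ j, IsGadget (s j)
  · obtain ⟨j, hj⟩ := hs
    by_cases hi : IsGadget (s i)
    · by_cases hall : ∀ j, IsGadget (s j)
      · obtain ⟨a, rfl⟩ := exists_eq_gadgetStrat hall
        exact (hU i a).trans_eq (BigU_gadgetStrat i a).symm
      · have card_pos := card_gadget_pos hi
        simp only [BigU, dif_neg hall, if_pos hi]
        rcases i <;> dsimp only <;> split_ifs <;> first | omega | norm_num
    · exact (BigU_eq_zero hi hj).ge
  · push Not at hs
    obtain ⟨a, b, rfl⟩ := exists_eq_duelProfile hs 0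
    obtain ⟨h₁, h₂, h₃⟩ := pairU_nonneg (Cl := Cl) a b
    rw [BigU_duelProfile]
    rcases i
    · dsimp only
      split_ifs <;> assumption
    · exact h₃

end ConstructedGame

section LiftProfile

variable {k n m : ℕ} {Shat : Player k → Type} {i : Player k} {σh : ∀ i, Shat i → ℝ}

@[simp]
lemma liftProfile_gadgetStrat (a : Shat i) :
    (liftProfile Shat σh i (gadgetStrat a : Strat Shat n m i)) = σh i a := by
  rcases i <;> rfl

lemma liftProfile_of_not_isGadget {t : Strat Shat n m i} (ht : ¬ IsGadget t) :
    liftProfile Shat σh i t = 0 := by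
  rcases i <;> rcases t <;> first | rfl | exact absurd rfl ht

lemma isGadget_of_liftProfile_ne_zero {t : Strat Shat n m i} (ht : liftProfile Shat σh i t ≠ 0) :
    IsGadget t :=
  not_imp_comm.1 liftProfile_of_not_isGadget ht

lemma eq_liftProfile {σ : ∀ i, Strat Shat n m i → ℝ} (hσ : ∀ i t, ¬ IsGadget t → σ i t = 0) :
    σ = liftProfile Shat fun i a => σ i (gadgetStrat a) := by
  funext i t
  by_cases ht : IsGadget t
  · obtain ⟨a, rfl⟩ := ht.exists_eq
    rw [liftProfile_gadgetStrat]
  · rw [hσ i t ht, liftProfile_of_not_isGadget ht]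

open scoped Classical in
lemma update_liftProfile_single (a : Shat i) :
    Function.update (liftProfile Shat σh : ∀ i, Strat Shat n m i → ℝ) i
        (Pi.single (gadgetStrat a) 1) =
      liftProfile Shat (Function.update σh i (Pi.single a 1)) := by
  funext j t
  rcases eq_or_ne j i with rfl | hj
  · rw [Function.update_self]
    by_cases ht : IsGadget t
    · obtain ⟨b, rfl⟩ := ht.exists_eq
      simp [Pi.single_apply, gadgetStrat_injective.eq_iff]
    · rw [liftProfile_of_not_isGadget ht, Pi.single_eq_of_ne]
      rintro rfl
      exact ht (isGadget_gadgetStrat a)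
  · rw [Function.update_of_ne hj]
    by_cases ht : IsGadget t
    · obtain ⟨b, rfl⟩ := ht.exists_eq
      simp [Function.update_of_ne hj]
    · simp only [liftProfile_of_not_isGadget ht]

variable [∀ i, Fintype (Shat i)] {Uhat : (i : Player k) → (∀ j, Shat j) → ℝ}
  {Cl : Fin m → Finset (Lit n)}

lemma isDist_liftProfile_iff :
    IsDist (liftProfile Shat σh i : Strat Shat n m i → ℝ) ↔ IsDist (σh i) := by
  have nonneg_iff :
      (∀ t : Strat Shat n m i, 0 ≤ liftProfile Shat σh i t) ↔ ∀ a, 0 ≤ σh i a := by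
    refine ⟨fun h a => by simpa using h (gadgetStrat a), fun h t => ?_⟩
    by_cases ht : IsGadget t
    · obtain ⟨a, rfl⟩ := ht.exists_eq
      simpa using h a
    · exact (liftProfile_of_not_isGadget ht).ge
  have sum_eq : ∑ a, σh i a = ∑ t : Strat Shat n m i, liftProfile Shat σh i t := by
    refine Fintype.sum_of_injective gadgetStrat gadgetStrat_injective _ _ (fun t ht => ?_)
      fun a => (liftProfile_gadgetStrat a).symm
    exact liftProfile_of_not_isGadget fun h => ht (h.exists_eq.imp fun _ => Eq.symm)
  rw [IsDist, IsDist, nonneg_iff, sum_eq]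

lemma EU_liftProfile (i : Player k) :
    EU (BigU Shat Uhat Cl) (liftProfile Shat σh) i = EU Uhat σh i := by
  have injective : Function.Injective fun (a : ∀ j, Shat j) (j : Player k) =>
      (gadgetStrat (a j) : Strat Shat n m j) := fun a b hab =>
    funext fun j => gadgetStrat_injective (congrFun hab j)
  refine (Fintype.sum_of_injective _ injective _ _ (fun s hs => ?_) fun a => ?_).symm
  · obtain ⟨j, hj⟩ : ∃ j, ¬ IsGadget (s j) := by
      by_contra! h
      exact hs ((exists_eq_gadgetStrat h).imp fun _ => Eq.symm)
    rw [prod_eq_zero (mem_univ j) (liftProfile_of_not_isGadget hj), zero_mul]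
  · simp only [liftProfile_gadgetStrat, BigU_gadgetStrat]

lemma deviationEU_liftProfile_gadgetStrat (a : Shat i) :
    deviationEU (BigU Shat Uhat Cl) (liftProfile Shat σh) i (gadgetStrat a) =
      deviationEU Uhat σh i a := by
  rw [deviationEU, update_liftProfile_single, EU_liftProfile, deviationEU]

lemma deviationEU_liftProfile_of_not_isGadget {t : Strat Shat n m i} (ht : ¬ IsGadget t) :
    deviationEU (BigU Shat Uhat Cl) (liftProfile Shat σh) i t = 0 := by
  refine deviationEU_eq_zero fun s hs hpos => ?_
  obtain ⟨j, hj⟩ := exists_player_ne i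
  exact BigU_eq_zero (hs ▸ ht) (isGadget_of_liftProfile_ne_zero (hpos j hj))

lemma isNashEq_liftProfile_iff (hU : ∀ i a, 0 ≤ Uhat i a) :
    IsNashEq (BigU Shat Uhat Cl) (liftProfile Shat σh) ↔ IsNashEq Uhat σh := by
  simp only [isNashEq_iff_deviationEU_le, isDist_liftProfile_iff, EU_liftProfile]
  refine and_congr_right fun hdist => ⟨fun h i a => ?_, fun h i t => ?_⟩
  · exact deviationEU_liftProfile_gadgetStrat a ▸ h i (gadgetStrat a)
  · by_cases ht : IsGadget t
    · obtain ⟨a, rfl⟩ := ht.exists_eq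
      exact (deviationEU_liftProfile_gadgetStrat a).trans_le (h i a)
    · rw [deviationEU_liftProfile_of_not_isGadget ht]
      exact sum_nonneg fun a _ => mul_nonneg (prod_nonneg fun j _ => (hdist j).1 _) (hU i a)

end LiftProfile

section Equilibria

variable {k n m : ℕ} {Shat : Player k → Type} {i j : Player k} {p : Fin 2}
  {Uhat : (i : Player k) → (∀ j, Shat j) → ℝ} {Cl : Fin m → Finset (Lit n)}
  {σ : ∀ i, Strat Shat n m i → ℝ}

/-- The weights that the special player `p` puts on the literals. -/
def litWeight (σ : ∀ i, Strat Shat n m i → ℝ) (p : Fin 2) (l : Lit n) : ℝ :=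
  σ (.inl p) (auxStrat Shat p (.inl l))

lemma prod_erase_duelProfile (σ : ∀ i, Strat Shat n m i → ℝ) (p : Fin 2) (a : SpecialAux n m)
    (l : Lit n) :
    ∏ j ∈ univ.erase (.inl p), σ j (duelProfile Shat p a (.inl l) j) =
      (∏ q, σ (.inr q) (deltaStrat Shat q)) * litWeight σ (otherP p) l := by
  have erase_eq : univ.erase (.inl p) =
      (univ.map Function.Embedding.inr).cons (.inl (otherP p) : Player k) (by simp) := by
    ext j
    rcases j with q | q
    · simpa using ⟨eq_otherP_of_ne, fun h => h ▸ otherP_ne p⟩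
    · simp
  rw [erase_eq, prod_cons, prod_map, duelProfile_otherP, mul_comm]
  rfl

variable [∀ i, Fintype (Shat i)]

-- Only the profiles `duelProfile Shat p a l` contribute: if somebody plays in `Ĝ`, or if the other
-- special player does not play a literal, the non-gadget strategy `a` yields `0`.
lemma deviationEU_eq_prod_mul_expDuelPayoff (p : Fin 2) (a : SpecialAux n m) :
    deviationEU (BigU Shat Uhat Cl) σ (.inl p) (auxStrat Shat p a) =
      (∏ q, σ (.inr q) (deltaStrat Shat q)) * expDuelPayoff Cl p (litWeight σ (otherP p)) a := by
  classical
  rw [deviationEU_eq_sum, expDuelPayoff, mul_sum]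
  refine (sum_of_injOn (fun l => duelProfile Shat p a (.inl l)) ?_ ?_ ?_ ?_).symm
  · intro l _ l' _ h
    have := congrFun h (.inl (otherP p))
    simp only [duelProfile_otherP] at this
    exact Sum.inl_injective (auxStrat_injective _ this)
  · intro l _
    simp [duelProfile_self]
  · intro s hs hs_range
    have hsp : s (.inl p) = auxStrat Shat p a := (mem_filter.1 hs).2
    have hp : ¬ IsGadget (s (.inl p)) := hsp ▸ not_isGadget_auxStrat p a
    by_cases hgadget : ∃ j, IsGadget (s j)
    · obtain ⟨j, hj⟩ := hgadget
      rw [BigU_eq_zero hp hj, mul_zero]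
    · push Not at hgadget
      obtain ⟨a', b, rfl⟩ := exists_eq_duelProfile hgadget p
      obtain rfl : a' = a := auxStrat_injective p ((duelProfile_self ..).symm.trans hsp)
      rcases b with l | b
      · exact absurd ⟨l, by simp, rfl⟩ hs_range
      · rw [BigU_special_duelProfile, duelPayoff_nonliteral, mul_zero]
  · intro l _
    rw [prod_erase_duelProfile, BigU_special_duelProfile, mul_assoc]

lemma IsNashEq.isLiteralBestReply (h : IsNashEq (BigU Shat Uhat Cl) σ)
    (hδ : ∀ q, 0 < σ (.inr q) (deltaStrat Shat q)) (p : Fin 2) :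
    IsLiteralBestReply Cl p (litWeight σ p) (litWeight σ (otherP p)) := by
  intro l a hl
  have hle : deviationEU (BigU Shat Uhat Cl) σ (.inl p) (auxStrat Shat p a) ≤
      deviationEU (BigU Shat Uhat Cl) σ (.inl p) (auxStrat Shat p (.inl l)) :=
    (h.deviationEU_le _ _).trans_eq (h.deviationEU_eq hl).symm
  simp only [deviationEU_eq_prod_mul_expDuelPayoff] at hle
  exact le_of_mul_le_mul_left hle (prod_pos fun q _ => hδ q)

lemma exists_BigU_update_pos [∀ i, Nonempty (Shat i)] (hPUP : HasPositiveUtility Uhat)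
    {s : ∀ j, Strat Shat n m j} (hij : i ≠ j) (hj : IsGadget (s j)) :
    ∃ a : Shat i, 0 < BigU Shat Uhat Cl i (Function.update s i (gadgetStrat a)) := by
  by_cases hs : ∀ l ≠ i, IsGadget (s l)
  · choose! b hb using fun l hl => (hs l hl).exists_eq
    obtain ⟨a, ha⟩ := hPUP i b
    refine ⟨a, ?_⟩
    have update_eq : Function.update s i (gadgetStrat a) =
        fun l => gadgetStrat (Function.update b i a l) := by
      funext l
      rcases eq_or_ne l i with rfl | hl
      · simp
      · simp [hl, hb l hl]
    rwa [update_eq, BigU_gadgetStrat]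
  · push Not at hs
    obtain ⟨l, hl, hsl⟩ := hs
    obtain ⟨a⟩ := ‹∀ i, Nonempty (Shat i)› i
    refine ⟨a, ?_⟩
    rw [BigU_eq_one (by simpa using isGadget_gadgetStrat a) hij (by simpa [hij.symm] using hj)
      fun h => hsl (by simpa [hl] using h l)]
    exact one_pos

lemma BigU_update_eq_one_of_allowed {s : ∀ j, Strat Shat n m j} (hs : ∀ j, ¬ IsGadget (s j))
    {b : SpecialAux n m} (hb : s (.inl (otherP p)) = auxStrat Shat (otherP p) b)
    (hallowed : allowedB (.inr b : Shat (.inl (otherP p)) ⊕ SpecialAux n m) = true)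
    (a : Shat (.inl p)) :
    BigU Shat Uhat Cl (.inl p) (Function.update s (.inl p) (gadgetStrat a)) = 1 := by
  refine BigU_eq_one_of_allowed (by simpa using isGadget_gadgetStrat a)
    (fun j hj => by simpa [hj] using hs j) ?_
  have : specialOf Shat (otherP p) (Function.update s (.inl p) (gadgetStrat a)) = .inr b :=
    (Function.update_of_ne (Sum.inl_injective.ne (otherP_ne p)) ..).trans hb
  rw [this, hallowed]

-- If somebody else plays in `Ĝ`, then player `i` can earn something by joining, so her equilibrium
-- strategy `t` has to earn something too.
lemma IsNashEq.exists_support_not_isGadget [∀ i, Nonempty (Shat i)]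
    (h : IsNashEq (BigU Shat Uhat Cl) σ) (hU : ∀ i a, 0 ≤ Uhat i a)
    (hPUP : HasPositiveUtility Uhat) {t : Strat Shat n m i} (ht : ¬ IsGadget t) (hσt : 0 < σ i t) :
    ∃ s : ∀ j, Strat Shat n m j, ∀ j, 0 < σ j (s j) ∧ ¬ IsGadget (s j) := by
  choose s hs using fun j => (h.1 j).exists_pos
  by_cases hgadget : ∃ j ≠ i, IsGadget (s j)
  · obtain ⟨j, hj, hsj⟩ := hgadget
    obtain ⟨a, ha⟩ := exists_BigU_update_pos (Cl := Cl) hPUP hj.symm hsj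
    obtain ⟨s', hs't, hs', hpos⟩ :=
      h.exists_pos_of_pos (BigU_nonneg hU i) (fun j _ => hs j) ha hσt
    refine ⟨s', fun j => ⟨?_, fun hj => hpos.ne' (BigU_eq_zero (hs't ▸ ht) hj)⟩⟩
    rcases eq_or_ne j i with rfl | hj
    · rwa [hs't]
    · exact hs' j hj
  · push Not at hgadget
    exact ⟨Function.update s i t,
      (Function.forall_update_iff s (p := fun j t => 0 < σ j t ∧ ¬ IsGadget t)).2
        ⟨⟨hσt, ht⟩, fun j hj => ⟨hs j, hgadget j hj⟩⟩⟩

-- If player `otherP p` does not play a literal in `s`, then `p` could earn `1` by playing in `Ĝ`,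
-- while she plays a non-gadget strategy, which earns her something only against literals.
lemma IsNashEq.exists_litWeight_pos [∀ i, Nonempty (Shat i)] (h : IsNashEq (BigU Shat Uhat Cl) σ)
    (hU : ∀ i a, 0 ≤ Uhat i a) {s : ∀ j, Strat Shat n m j} (hs : ∀ j, 0 < σ j (s j))
    (hgadget : ∀ j, ¬ IsGadget (s j)) (p : Fin 2) : ∃ l, 0 < litWeight σ (otherP p) l := by
  obtain ⟨b, hb⟩ := exists_eq_auxStrat (hgadget (.inl (otherP p)))
  rcases b with l | b
  · exact ⟨l, (hs (.inl (otherP p))).trans_eq (congrArg _ hb)⟩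
  obtain ⟨a⟩ := ‹∀ i, Nonempty (Shat i)› (.inl p)
  have deviation_pos :
      0 < BigU Shat Uhat Cl (.inl p) (Function.update s (.inl p) (gadgetStrat a)) :=
    one_pos.trans_eq (BigU_update_eq_one_of_allowed hgadget hb rfl a).symm
  obtain ⟨s', hs'p, hs', hpos⟩ :=
    h.exists_pos_of_pos (BigU_nonneg hU _) (fun j _ => hs j) deviation_pos (hs (.inl p))
  obtain ⟨a', b', rfl⟩ := exists_eq_duelProfile
    (fun j hj => hpos.ne' (BigU_eq_zero (hs'p ▸ hgadget (.inl p)) hj)) p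
  rw [BigU_special_duelProfile] at hpos
  rcases b' with l | b'
  · have hl := hs' _ (Sum.inl_injective.ne (otherP_ne p))
    exact ⟨l, hl.trans_eq (congrArg _ (duelProfile_otherP ..))⟩
  · exact absurd (duelPayoff_nonliteral a' b') hpos.ne'

theorem IsNashEq.exists_satisfies [∀ i, Nonempty (Shat i)] (h : IsNashEq (BigU Shat Uhat Cl) σ)
    (hn : 4 ≤ n) (hU : ∀ i a, 0 ≤ Uhat i a) (hPUP : HasPositiveUtility Uhat)
    (hCl : ∀ c, 3 ≤ (Cl c).card) {t : Strat Shat n m i} (ht : ¬ IsGadget t) (hσt : 0 < σ i t) :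
    ∃ γ, Satisfies Cl γ := by
  have : NeZero n := ⟨by omega⟩
  obtain ⟨s, hs⟩ := h.exists_support_not_isGadget hU hPUP ht hσt
  have hδ (q : Fin k) : 0 < σ (.inr q) (deltaStrat Shat q) :=
    eq_deltaStrat (hs (.inr q)).2 ▸ (hs (.inr q)).1
  have litWeight_pos := h.exists_litWeight_pos hU (fun j => (hs j).1) fun j => (hs j).2
  have litWeight_nonneg (p : Fin 2) (l : Lit n) : 0 ≤ litWeight σ p l := (h.1 (.inl p)).1 _
  exact (h.isLiteralBestReply hδ 0).exists_satisfies (h.isLiteralBestReply hδ 1) hn hCl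
    (litWeight_nonneg 0) (litWeight_nonneg 1) (litWeight_pos 1) (litWeight_pos 0)

end Equilibria

theorem reduction_unsatisfiable_nash_equivalence_general
    {k n m : ℕ} (hn : 4 ≤ n)
    (Shat : Player k → Type) [∀ i, Fintype (Shat i)] [∀ i, Nonempty (Shat i)]
    (Uhat : (i : Player k) → (∀ j, Shat j) → ℝ)
    (hU : ∀ i a, 0 ≤ Uhat i a) (hPUP : HasPositiveUtility Uhat)
    (Cl : Fin m → Finset (Lit n)) (hCl : ∀ c, 3 ≤ (Cl c).card)
    (hunsat : ¬ ∃ γ : Fin n → Bool, Satisfies Cl γ)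
    (σ : ∀ i, Strat Shat n m i → ℝ) :
    IsNashEq (BigU Shat Uhat Cl) σ ↔
      ∃ σh : ∀ i, Shat i → ℝ, IsNashEq Uhat σh ∧ σ = liftProfile Shat σh := by
  constructor
  · intro hσ
    have gadget_support (i) (t : Strat Shat n m i) (ht : ¬ IsGadget t) : σ i t = 0 := by
      by_contra hne
      exact hunsat (hσ.exists_satisfies hn hU hPUP hCl ht (((hσ.1 i).1 t).lt_of_ne' hne))
    have hlift := eq_liftProfile gadget_support
    exact ⟨_, (isNashEq_liftProfile_iff hU).1 (hlift ▸ hσ), hlift⟩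
  · rintro ⟨σh, hσh, rfl⟩
    exact (isNashEq_liftProfile_iff hU).2 hσh

/-- For the win-lose game `G = G(Ĝ, φ)` built from an `r`-player win-lose gadget game
`Ĝ` with the positive utility property and a 3SAT formula `φ` with `n ≥ 4` variables:
if `φ` is unsatisfiable, then the Nash equilibria of `G` are exactly the Nash
equilibria of `Ĝ` (identified with mixed profiles of `G` supported on gadget
strategies). -/
theorem reduction_unsatisfiable_nash_equivalence
    {k n m : ℕ} (hn : 4 ≤ n)
    (Shat : Player k → Type) [∀ i, Fintype (Shat i)] [∀ i, Nonempty (Shat i)]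
    (Uhat : (i : Player k) → (∀ j, Shat j) → ℝ)
    (hWL : ∀ i s, Uhat i s = 0 ∨ Uhat i s = 1)
    (hPUP : ∀ (i : Player k) (s : ∀ j, Shat j), ∃ t, 0 < Uhat i (Function.update s i t))
    (Cl : Fin m → Finset (Lit n)) (h3 : ∀ c, (Cl c).card = 3)
    (hunsat : ¬ ∃ γ : Fin n → Bool, Satisfies Cl γ) :
    ∀ σ : ∀ i, Strat Shat n m i → ℝ,
      IsNashEq (BigU Shat Uhat Cl) σ ↔
        ∃ σh : ∀ i, Shat i → ℝ, IsNashEq Uhat σh ∧ σ = liftProfile Shat σh := by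
  exact reduction_unsatisfiable_nash_equivalence_general hn Shat Uhat
    (fun i a => (hWL i a).elim Eq.ge fun h => h ▸ zero_le_one) hPUP Cl (fun c => (h3 c).ge) hunsat
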